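/- arXiv:2104.03181 — 5 statements merged into one kernel-verified Lean document; each statement's English description precedes it below -/
import Mathlib

section
/- Let S be a connected Hausdorff topological space and let φ : S → OnePoint ℂ be a local homeomorphism into the one-point compactification of ℂ (the Riemann sphere). Suppose U ⊆ S is an open subset such that the restriction of φ to U is a homeomorphism from U onto the range of the coercion ℂ → OnePoint ℂ (that is, onto the complement of the point ∞). Then either U = S, or φ is a homeomorphism from S onto OnePoint ℂ. -/
open OnePoint

/-!
The inverse of `φ` on `U` is a section over the complement of `∞`, and since `S` is Hausdorff every
frontier point of `U` lies over `∞`. Discs around `∞` stay connected when `∞` is removed, so near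
such a frontier point `p` the surface cannot leave `U` except at `p` itself: `U` contains a
punctured neighbourhood of `p`. Hence `closure U` is open, so it is all of `S`, and any two frontier
points, having the same image, are limits of the same section and agree. If `U ≠ S`, then
`S = U ∪ {p}` and `φ` is bijective.
-/

open Filter Set Topology

section PuncturedNeighborhoods

variable {X Y : Type*} [TopologicalSpace X] [TopologicalSpace Y]

/-- The point `x` does not separate its small neighbourhoods: the punctured neighbourhood filter of
`x` has a basis of preconnected sets. These sets need not be open, and isolated points satisfy the
condition. -/
def HasPreconnectedPuncturedNhds (x : X) : Prop :=
  ∀ V ∈ 𝓝[≠] x, ∃ W ∈ 𝓝[≠] x, W ⊆ V ∧ IsPreconnected W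

theorem map_nhdsNE_openPartialHomeomorph (f : OpenPartialHomeomorph X Y) {x : X}
    (hx : x ∈ f.source) : map f (𝓝[≠] x) = 𝓝[≠] (f x) := by
  have himage : f.IsImage {x}ᶜ {f x}ᶜ := fun _ hy => (f.injOn.eq_iff hy hx).not
  exact himage.map_nhdsWithin_eq hx

theorem map_nhdsNE_of_isLocalHomeomorph {φ : X → Y} (hφ : IsLocalHomeomorph φ) (x : X) :
    map φ (𝓝[≠] x) = 𝓝[≠] (φ x) := by
  obtain ⟨f, hx, rfl⟩ := hφ x
  exact map_nhdsNE_openPartialHomeomorph f hx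

theorem HasPreconnectedPuncturedNhds.of_isLocalHomeomorph {φ : X → Y} (hφ : IsLocalHomeomorph φ)
    {x : X} (h : HasPreconnectedPuncturedNhds (φ x)) : HasPreconnectedPuncturedNhds x := by
  obtain ⟨f, hx, rfl⟩ := hφ x
  have hmap : map f.symm (𝓝[≠] (f x)) = 𝓝[≠] x := by
    rw [map_nhdsNE_openPartialHomeomorph f.symm (f.map_source hx), f.left_inv hx]
  intro V hV
  have htarget : f.target ∈ 𝓝[≠] (f x) :=
    mem_nhdsWithin_of_mem_nhds (f.open_target.mem_nhds (f.map_source hx))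
  obtain ⟨W, hW, hWsub, hWconn⟩ := h _ (inter_mem htarget (mem_map.1 (hmap.symm ▸ hV)))
  exact ⟨f.symm '' W, hmap ▸ image_mem_map hW, image_subset_iff.2 fun _ hy => (hWsub hy).2,
    hWconn.image _ (f.continuousOn_symm.mono fun _ hy => (hWsub hy).1)⟩

theorem HasPreconnectedPuncturedNhds.mem_nhdsNE_of_mem_frontier {U : Set X} {p : X}
    (h : HasPreconnectedPuncturedNhds p) (hU : IsOpen U) (hp : p ∈ frontier U)
    (hfrontier : (frontier U)ᶜ ∈ 𝓝[≠] p) : U ∈ 𝓝[≠] p := by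
  rw [hU.frontier_eq] at hp
  obtain ⟨W, hW, hWsub, hWconn⟩ := h _ hfrontier
  have hmeet : (W ∩ U).Nonempty := by
    have : (𝓝[U] p).NeBot := mem_closure_iff_nhdsWithin_neBot.1 hp.1
    have hle : 𝓝[U] p ≤ 𝓝[≠] p := nhdsWithin_mono p (subset_compl_singleton_iff.2 hp.2)
    exact nonempty_of_mem (inter_mem (hle hW) self_mem_nhdsWithin)
  have hWU : W ⊆ U := hWconn.subset_of_closure_inter_subset hU hmeet fun y ⟨hy, hyW⟩ =>
    by_contra fun hyU => hWsub hyW (hU.frontier_eq ▸ ⟨hy, hyU⟩)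
  exact mem_of_superset hW hWU

end PuncturedNeighborhoods

section SphereAtInfinity

variable {E : Type*} [NormedAddCommGroup E] [NormedSpace ℝ E]

theorem isPreconnected_compl_closedBall_of_one_lt_rank (h : 1 < Module.rank ℝ E) (c : E) (r : ℝ) :
    IsPreconnected (Metric.closedBall c r)ᶜ := by
  rcases lt_or_ge r 0 with hr | hr
  · rw [Metric.closedBall_eq_empty.2 hr, compl_empty]
    exact isPreconnected_univ
  have hpolar : (Metric.closedBall c r)ᶜ =
      (fun q : ℝ × E => c + q.1 • q.2) '' (Ioi r ×ˢ Metric.sphere 0 1) := by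
    ext x
    simp only [mem_compl_iff, Metric.mem_closedBall, dist_eq_norm, not_le, mem_image, mem_prod,
      mem_Ioi, mem_sphere_zero_iff_norm, Prod.exists]
    constructor
    · intro hx
      have hne : ‖x - c‖ ≠ 0 := (hr.trans_lt hx).ne'
      refine ⟨‖x - c‖, ‖x - c‖⁻¹ • (x - c), ⟨hx, ?_⟩, ?_⟩
      · rw [norm_smul, norm_inv, norm_norm, inv_mul_cancel₀ hne]
      · rw [smul_inv_smul₀ hne, add_sub_cancel]
    · rintro ⟨t, u, ⟨ht, hu⟩, rfl⟩
      rwa [add_sub_cancel_left, norm_smul, hu, mul_one, Real.norm_of_nonneg (hr.trans ht.le)]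
  rw [hpolar]
  exact (isPreconnected_Ioi.prod (isPreconnected_sphere h 0 1)).image _ (by fun_prop)

theorem hasPreconnectedPuncturedNhds_infty [ProperSpace E] (h : 1 < Module.rank ℝ E) :
    HasPreconnectedPuncturedNhds (∞ : OnePoint E) := by
  have hbasis : (𝓝[≠] (∞ : OnePoint E)).HasBasis (fun _ => True)
      fun r : ℝ => (↑) '' (Metric.closedBall (0 : E) r)ᶜ := by
    rw [nhdsNE_infty_eq, coclosedCompact_eq_cocompact, ← Metric.cobounded_eq_cocompact]
    exact (Metric.hasBasis_cobounded_compl_closedBall 0).map _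
  intro V hV
  obtain ⟨r, -, hrV⟩ := hbasis.mem_iff.1 hV
  exact ⟨_, hbasis.mem_of_mem trivial, hrV,
    (isPreconnected_compl_closedBall_of_one_lt_rank h 0 r).image _ continuous_coe.continuousOn⟩

end SphereAtInfinity

theorem bijOn_of_equiv_coe {α β : Type*} {f : α → β} {s : Set α} {t : Set β} (e : s ≃ t)
    (he : ∀ x : s, (e x : β) = f x) : BijOn f s t := by
  refine ⟨fun x hx => he ⟨x, hx⟩ ▸ (e ⟨x, hx⟩).2, fun x hx y hy hxy => ?_, fun y hy => ?_⟩
  · have : e ⟨x, hx⟩ = e ⟨y, hy⟩ := Subtype.ext (by rw [he, he]; exact hxy)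
    exact congrArg Subtype.val (e.injective this)
  · exact ⟨e.symm ⟨y, hy⟩, Subtype.coe_prop _, by rw [← he, e.apply_symm_apply]⟩

section LocalHomeomorph

variable {S Y : Type*} [TopologicalSpace S] {φ : S → Y} {U : Set S}

theorem eq_of_injOn_of_tendsto_map_nhdsWithin (hsep : IsSeparatedMap φ) (hinj : InjOn φ U)
    {p q : S} (hp : p ∈ closure U) (hpq : φ p = φ q)
    (hlim : Tendsto φ (𝓝[U] p) (map φ (𝓝[U] q))) : p = q := by
  by_contra hne
  obtain ⟨V, W, hV, hW, hpV, hqW, hVW⟩ := hsep p q hpq hne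
  have : (𝓝[U] p).NeBot := mem_closure_iff_nhdsWithin_neBot.1 hp
  have hWU : W ∩ U ∈ 𝓝[U] q :=
    inter_mem (mem_nhdsWithin_of_mem_nhds (hW.mem_nhds hqW)) self_mem_nhdsWithin
  have hVU : V ∩ U ∈ 𝓝[U] p :=
    inter_mem (mem_nhdsWithin_of_mem_nhds (hV.mem_nhds hpV)) self_mem_nhdsWithin
  have hlift : φ ⁻¹' (φ '' (W ∩ U)) ∈ 𝓝[U] p := hlim (image_mem_map hWU)
  obtain ⟨x, ⟨w, ⟨hwW, hwU⟩, hwx⟩, hxV, hxU⟩ :=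
    Filter.nonempty_of_mem (inter_mem hlift hVU)
  exact disjoint_left.1 hVW hxV (hinj hwU hxU hwx ▸ hwW)

variable [TopologicalSpace Y]

theorem apply_notMem_image_of_mem_frontier (hφ : IsLocalHomeomorph φ) (hsep : IsSeparatedMap φ)
    (hU : IsOpen U) (hinj : InjOn φ U) {p : S} (hp : p ∈ frontier U) : φ p ∉ φ '' U := by
  rw [hU.frontier_eq] at hp
  rintro ⟨q, hq, hqp⟩
  refine hp.2 (eq_of_injOn_of_tendsto_map_nhdsWithin hsep hinj hp.1 hqp.symm ?_ ▸ hq)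
  rw [hU.nhdsWithin_eq hq, hφ.map_nhds_eq, hqp]
  exact hφ.continuous.continuousAt.tendsto.mono_left nhdsWithin_le_nhds

variable {y₀ : Y}

theorem apply_eq_of_mem_frontier_of_bijOn (hφ : IsLocalHomeomorph φ) (hsep : IsSeparatedMap φ)
    (hU : IsOpen U) (hbij : BijOn φ U {y₀}ᶜ) {p : S} (hp : p ∈ frontier U) : φ p = y₀ := by
  simpa [hbij.image_eq] using apply_notMem_image_of_mem_frontier hφ hsep hU hbij.injOn hp

theorem mem_nhdsNE_of_mem_frontier_of_bijOn (hφ : IsLocalHomeomorph φ) (hsep : IsSeparatedMap φ)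
    (hy₀ : HasPreconnectedPuncturedNhds y₀) (hU : IsOpen U) (hbij : BijOn φ U {y₀}ᶜ) {p : S}
    (hp : p ∈ frontier U) : U ∈ 𝓝[≠] p := by
  obtain rfl : φ p = y₀ := apply_eq_of_mem_frontier_of_bijOn hφ hsep hU hbij hp
  refine (hy₀.of_isLocalHomeomorph hφ).mem_nhdsNE_of_mem_frontier hU hp ?_
  have hfiber : φ ⁻¹' {φ p}ᶜ ∈ 𝓝[≠] p :=
    (map_nhdsNE_of_isLocalHomeomorph hφ p).le self_mem_nhdsWithin
  exact mem_of_superset hfiber fun _ hx hfr =>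
    hx (apply_eq_of_mem_frontier_of_bijOn hφ hsep hU hbij hfr)

theorem isClopen_closure_of_bijOn_compl_singleton (hφ : IsLocalHomeomorph φ)
    (hsep : IsSeparatedMap φ) (hy₀ : HasPreconnectedPuncturedNhds y₀) (hU : IsOpen U)
    (hbij : BijOn φ U {y₀}ᶜ) : IsClopen (closure U) := by
  refine ⟨isClosed_closure, isOpen_iff_mem_nhds.2 fun p hp => ?_⟩
  by_cases hpU : p ∈ U
  · exact mem_of_superset (hU.mem_nhds hpU) subset_closure
  · have hfr : p ∈ frontier U := by
      rw [hU.frontier_eq]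
      exact ⟨hp, hpU⟩
    have hmem : U ∈ 𝓝[≠] p := mem_nhdsNE_of_mem_frontier_of_bijOn hφ hsep hy₀ hU hbij hfr
    exact mem_of_superset (insert_mem_nhds_iff.2 hmem) (insert_subset hp subset_closure)

theorem subsingleton_frontier_of_bijOn_compl_singleton (hφ : IsLocalHomeomorph φ)
    (hsep : IsSeparatedMap φ) (hy₀ : HasPreconnectedPuncturedNhds y₀) (hU : IsOpen U)
    (hbij : BijOn φ U {y₀}ᶜ) : (frontier U).Subsingleton := by
  have hmap : ∀ x ∈ frontier U, map φ (𝓝[U] x) = 𝓝[≠] y₀ := by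
    intro x hx
    have hUx : U ∈ 𝓝[≠] x := mem_nhdsNE_of_mem_frontier_of_bijOn hφ hsep hy₀ hU hbij hx
    have hxU : x ∉ U := (hU.frontier_eq ▸ hx).2
    have hpunctured : 𝓝[U] x = 𝓝[≠] x :=
      (nhdsWithin_mono x (subset_compl_singleton_iff.2 hxU)).antisymm
        (nhdsWithin_le_iff.2 hUx)
    rw [hpunctured, map_nhdsNE_of_isLocalHomeomorph hφ,
      apply_eq_of_mem_frontier_of_bijOn hφ hsep hU hbij hx]
  intro p hp q hq
  have himage : φ p = φ q := (apply_eq_of_mem_frontier_of_bijOn hφ hsep hU hbij hp).trans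
    (apply_eq_of_mem_frontier_of_bijOn hφ hsep hU hbij hq).symm
  exact eq_of_injOn_of_tendsto_map_nhdsWithin hsep hbij.injOn (frontier_subset_closure hp) himage
    ((hmap p hp).trans (hmap q hq).symm).le

theorem parabolic_subsurface_dichotomy_general [PreconnectedSpace S] [Nontrivial Y]
    (hφ : IsLocalHomeomorph φ) (hsep : IsSeparatedMap φ)
    (hy₀ : HasPreconnectedPuncturedNhds y₀) (hU : IsOpen U) (hbij : BijOn φ U {y₀}ᶜ) :
    U = univ ∨ IsHomeomorph φ := by
  refine or_iff_not_imp_left.2 fun hne => ⟨hφ.continuous, hφ.isOpenMap, ?_⟩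
  have hUne : U.Nonempty := by
    obtain ⟨y, hy⟩ := exists_ne y₀
    obtain ⟨x, hx, -⟩ := hbij.surjOn hy
    exact ⟨x, hx⟩
  obtain ⟨p, hp⟩ : (frontier U).Nonempty := nonempty_frontier_iff.2 ⟨hUne, hne⟩
  have hfrontier : frontier U = {p} :=
    (subsingleton_frontier_of_bijOn_compl_singleton hφ hsep hy₀ hU hbij).eq_singleton_of_mem hp
  have hS : insert p U = univ := by
    rw [insert_eq, union_comm, ← hfrontier, ← closure_eq_self_union_frontier]
    exact (isClopen_closure_of_bijOn_compl_singleton hφ hsep hy₀ hU hbij).eq_univ hUne.closure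
  obtain rfl : φ p = y₀ := apply_eq_of_mem_frontier_of_bijOn hφ hsep hU hbij hp
  have hY : insert (φ p) {φ p}ᶜ = univ := union_compl_self {φ p}
  rw [← bijOn_univ, ← hS, ← hY]
  exact hbij.insert (notMem_compl_iff.2 rfl)

end LocalHomeomorph

/-- Topological content of Lemma 2.1.1: a connected Möbius surface containing a
parabolic surface is either parabolic or elliptic. -/
theorem parabolic_subsurface_dichotomy
    (S : Type*) [TopologicalSpace S] [T2Space S] [ConnectedSpace S]
    (φ : S → OnePoint ℂ) (hφ : IsLocalHomeomorph φ)
    (U : Set S) (hU : IsOpen U)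
    (e : U ≃ₜ (Set.range ((↑) : ℂ → OnePoint ℂ)))
    (he : ∀ x : U, (e x : OnePoint ℂ) = φ x) :
    U = Set.univ ∨ IsHomeomorph φ :=
  have hrank : 1 < Module.rank ℝ ℂ := by simp
  parabolic_subsurface_dichotomy_general hφ (T2Space.isSeparatedMap φ)
    (hasPreconnectedPuncturedNhds_infty hrank) hU (compl_infty ▸ bijOn_of_equiv_coe e.toEquiv he)
end

section
/- Let A, B ∈ ℝ and let S ⊆ ℝ be a convex set such that A · cos s + B · sin s > 0 for all s ∈ S. Then the function s ↦ arcsinh (A · cos s + B · sin s) is strictly concave on S. -/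
/-! The function `u s = A cos s + B sin s` satisfies `u'' = -u`, so it is strictly concave wherever
it is positive. On `[0, ∞)` the function `arsinh` is strictly increasing and concave, its derivative
`1 / √(1 + x²)` being decreasing there, so composing with it preserves strict concavity. -/

open Set

theorem strictConcaveOn_comp_of_mapsTo {𝕜 E α β : Type*} [Semiring 𝕜] [PartialOrder 𝕜]
    [AddCommMonoid E] [AddCommMonoid α] [PartialOrder α] [AddCommMonoid β] [PartialOrder β]
    [SMul 𝕜 E] [SMul 𝕜 α] [SMul 𝕜 β] {s : Set E} {t : Set α} {f : E → α} {g : α → β}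
    (hg : ConcaveOn 𝕜 t g) (hg_mono : StrictMonoOn g t) (hf : StrictConcaveOn 𝕜 s f)
    (hst : MapsTo f s t) : StrictConcaveOn 𝕜 s (g ∘ f) := by
  refine ⟨hf.1, fun x hx y hy hxy a b ha hb hab => ?_⟩
  calc
    a • g (f x) + b • g (f y) ≤ g (a • f x + b • f y) :=
      hg.2 (hst hx) (hst hy) ha.le hb.le hab
    _ < g (f (a • x + b • y)) :=
      hg_mono (hg.1 (hst hx) (hst hy) ha.le hb.le hab) (hst (hf.1 hx hy ha.le hb.le hab))
        (hf.2 hx hy hxy ha hb hab)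

theorem deriv_arsinh : deriv Real.arsinh = fun x => (√(1 + x ^ 2))⁻¹ :=
  funext fun x => (Real.hasDerivAt_arsinh x).deriv

theorem strictConcaveOn_arsinh_Ici : StrictConcaveOn ℝ (Ici 0) Real.arsinh := by
  refine StrictAntiOn.strictConcaveOn_of_deriv (convex_Ici 0)
    Real.continuous_arsinh.continuousOn ?_
  rw [interior_Ici, deriv_arsinh]
  intro x (hx : 0 < x) y _ hxy
  dsimp only
  gcongr

theorem strictConcaveOn_arsinh_comp {E : Type*} [AddCommMonoid E] [SMul ℝ E] {s : Set E}
    {f : E → ℝ} (hf : StrictConcaveOn ℝ s f) (hf_nonneg : ∀ x ∈ s, 0 ≤ f x) :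
    StrictConcaveOn ℝ s fun x => Real.arsinh (f x) :=
  strictConcaveOn_comp_of_mapsTo (g := Real.arsinh) strictConcaveOn_arsinh_Ici.concaveOn
    (Real.arsinh_strictMono.strictMonoOn _) hf hf_nonneg

theorem deriv_cos_add_sin (A B : ℝ) :
    deriv (fun s => A * Real.cos s + B * Real.sin s) =
      fun s => B * Real.cos s + -A * Real.sin s := by
  funext s
  have hasDerivAt_sum := ((Real.hasDerivAt_cos s).const_mul A).fun_add
    ((Real.hasDerivAt_sin s).const_mul B)
  rw [hasDerivAt_sum.deriv]
  ring

theorem deriv2_cos_add_sin (A B : ℝ) :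
    deriv^[2] (fun s => A * Real.cos s + B * Real.sin s) =
      fun s => -(A * Real.cos s + B * Real.sin s) := by
  rw [Function.iterate_succ_apply, Function.iterate_one, deriv_cos_add_sin, deriv_cos_add_sin]
  funext s
  ring

theorem strictConcaveOn_cos_add_sin {A B : ℝ} {S : Set ℝ} (hS : Convex ℝ S)
    (hpos : ∀ s ∈ interior S, 0 < A * Real.cos s + B * Real.sin s) :
    StrictConcaveOn ℝ S fun s => A * Real.cos s + B * Real.sin s := by
  refine strictConcaveOn_of_deriv2_neg hS (by fun_prop) fun s hs => ?_
  rw [deriv2_cos_add_sin]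
  exact neg_neg_of_pos (hpos s hs)

theorem le_of_forall_interior_le {E α : Type*} [AddCommGroup E] [Module ℝ E] [TopologicalSpace E]
    [IsTopologicalAddGroup E] [ContinuousSMul ℝ E] [TopologicalSpace α] [Preorder α]
    [OrderClosedTopology α] {S : Set E} {f : E → α} {c : α} (hS : Convex ℝ S)
    (hS_interior : (interior S).Nonempty) (hf : ContinuousOn f S)
    (hc : ∀ x ∈ interior S, c ≤ f x) : ∀ x ∈ S, c ≤ f x := by
  intro x hx
  have mem_closure_interior : x ∈ closure (interior S) := by
    rw [hS.closure_interior_eq_closure_of_nonempty_interior hS_interior]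
    exact subset_closure hx
  exact continuousWithinAt_const.closure_le mem_closure_interior
    ((hf x hx).mono interior_subset) hc

theorem strictConcaveOn_arsinh_trig_general
    (A B : ℝ) (S : Set ℝ) (hS : Convex ℝ S)
    (hpos : ∀ s ∈ interior S, A * Real.cos s + B * Real.sin s > 0) :
    StrictConcaveOn ℝ S (fun s => Real.arsinh (A * Real.cos s + B * Real.sin s)) := by
  obtain hS_subsingleton | hS_nontrivial := S.subsingleton_or_nontrivial
  · exact ⟨hS, fun x hx y hy hxy => absurd (hS_subsingleton hx hy) hxy⟩
  · exact strictConcaveOn_arsinh_comp (strictConcaveOn_cos_add_sin hS hpos)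
      (le_of_forall_interior_le hS (hS.nontrivial_iff_nonempty_interior.mp hS_nontrivial)
        (by fun_prop) fun s hs => (hpos s hs).le)

/-- The analytic mechanism behind uniqueness of maximal disks/half-spaces: the signed
distance `s ↦ arcsinh (A cos s + B sin s)` is strictly concave where it is positive. -/
theorem strictConcaveOn_arsinh_trig
    (A B : ℝ) (S : Set ℝ) (hS : Convex ℝ S)
    (hpos : ∀ s ∈ S, A * Real.cos s + B * Real.sin s > 0) :
    StrictConcaveOn ℝ S (fun s => Real.arsinh (A * Real.cos s + B * Real.sin s)) :=
  strictConcaveOn_arsinh_trig_general A B S hS fun s hs => hpos s (interior_subset hs)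
end

section
/- Let c > 0 and let f : ℝ → ℝ be differentiable with f 0 > −1. Suppose that for all t ≥ 0 one has |f t| ≤ 1 and deriv f t ≥ c · (1 − (f t)²). Then for all t ≥ 0, 1 − f t ≤ (1 − f 0) · exp(−c · (1 + f 0) · t). In particular f t converges to 1 exponentially fast as t → ∞. -/
/-!
For `x₀ = f 0 ≥ -1`, the function `z t = 1 - (1 - x₀) * exp (-c * (1 + x₀) * t)` is a subsolution
of the Riccati equation `x' = c * (1 - x ^ 2)` on `t ≥ 0`: its defect
`c * (1 - z ^ 2) - z' = c * (1 - z) * (z - x₀)` is `(1 - x₀) ^ 2 * E * (c * (1 - E))` with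
`E = exp (-c * (1 + x₀) * t)`, and `c` and `1 - E` never have opposite signs. Since `f` is a
supersolution with the same initial value, the comparison principle gives `z ≤ f`.
-/

open Set
open scoped NNReal

section Comparison

variable {a b : ℝ} {y y' z z' : ℝ → ℝ}

theorem nonneg_of_mul_le_deriv_right {K : ℝ} (hy : ContinuousOn y (Icc a b))
    (hy' : ∀ t ∈ Ico a b, HasDerivWithinAt y (y' t) (Ici t) t) (ha : 0 ≤ y a)
    (hbound : ∀ t ∈ Ico a b, y t < 0 → K * y t ≤ y' t) :
    ∀ t ∈ Icc a b, 0 ≤ y t := by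
  intro t ht
  suffices h : ∀ δ > 0, -y t ≤ δ from
    neg_nonpos.mp (le_of_forall_pos_le_add fun δ hδ => by simpa using h δ hδ)
  intro δ hδ
  -- The rate `K + 1 > K` makes the fence strict, and it takes the value `δ` at time `t`.
  let B : ℝ → ℝ := fun s => δ * Real.exp ((K + 1) * (s - t))
  have hB_pos (s : ℝ) : 0 < B s := by positivity
  have hB (s : ℝ) : HasDerivAt B ((K + 1) * B s) s := by
    convert! ((((hasDerivAt_id s).sub_const t).const_mul (K + 1)).exp).const_mul δ using 1
    simp only [B, id]
    ring
  have hstrict : ∀ s ∈ Ico a b, -y s = B s → -y' s < (K + 1) * B s := by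
    intro s hs hsB
    have hle := hbound s hs (by linarith [hB_pos s])
    have hys : y s = -B s := by linarith
    rw [hys] at hle
    linarith [hB_pos s]
  have hfence : -y t ≤ B t :=
    image_le_of_deriv_right_lt_deriv_boundary hy.neg (fun s hs => (hy' s hs).neg)
      ((neg_nonpos.mpr ha).trans (hB_pos a).le) hB hstrict ht
  simpa [B] using hfence

theorem le_of_subsolution_of_supersolution_of_lipschitzOnWith
    {v : ℝ → ℝ → ℝ} {s : ℝ → Set ℝ} {K : ℝ≥0}
    (hv : ∀ t ∈ Ico a b, LipschitzOnWith K (v t) (s t))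
    (hz : ContinuousOn z (Icc a b))
    (hz' : ∀ t ∈ Ico a b, HasDerivWithinAt z (z' t) (Ici t) t)
    (hzs : ∀ t ∈ Ico a b, z t ∈ s t) (hsub : ∀ t ∈ Ico a b, z' t ≤ v t (z t))
    (hy : ContinuousOn y (Icc a b))
    (hy' : ∀ t ∈ Ico a b, HasDerivWithinAt y (y' t) (Ici t) t)
    (hys : ∀ t ∈ Ico a b, y t ∈ s t) (hsuper : ∀ t ∈ Ico a b, v t (y t) ≤ y' t)
    (ha : z a ≤ y a) :
    ∀ t ∈ Icc a b, z t ≤ y t := by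
  have hdiff : ∀ t ∈ Ico a b, y t - z t < 0 → K * (y t - z t) ≤ y' t - z' t := by
    intro t ht hneg
    have hlip := (hv t ht).dist_le_mul (y t) (hys t ht) (z t) (hzs t ht)
    rw [Real.dist_eq, Real.dist_eq, abs_of_neg hneg] at hlip
    calc K * (y t - z t) ≤ v t (y t) - v t (z t) := by linarith [neg_le_of_abs_le hlip]
      _ ≤ y' t - z' t := sub_le_sub (hsuper t ht) (hsub t ht)
  intro t ht
  exact sub_nonneg.mp <| nonneg_of_mul_le_deriv_right (hy.sub hz)
    (fun s hs => (hy' s hs).sub (hz' s hs)) (sub_nonneg.mpr ha) hdiff t ht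

theorem le_of_subsolution_of_supersolution_of_locallyLipschitz
    {v : ℝ → ℝ} (hv : LocallyLipschitz v)
    (hz : ContinuousOn z (Icc a b))
    (hz' : ∀ t ∈ Ico a b, HasDerivWithinAt z (z' t) (Ici t) t)
    (hsub : ∀ t ∈ Ico a b, z' t ≤ v (z t))
    (hy : ContinuousOn y (Icc a b))
    (hy' : ∀ t ∈ Ico a b, HasDerivWithinAt y (y' t) (Ici t) t)
    (hsuper : ∀ t ∈ Ico a b, v (y t) ≤ y' t) (ha : z a ≤ y a) :
    ∀ t ∈ Icc a b, z t ≤ y t := by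
  have hcompact : IsCompact (z '' Icc a b ∪ y '' Icc a b) :=
    (isCompact_Icc.image_of_continuousOn hz).union (isCompact_Icc.image_of_continuousOn hy)
  obtain ⟨K, hK⟩ := hv.locallyLipschitzOn.exists_lipschitzOnWith_of_compact hcompact
  exact le_of_subsolution_of_supersolution_of_lipschitzOnWith (v := fun _ => v) (fun _ _ => hK)
    hz hz' (fun t ht => .inl (mem_image_of_mem z (Ico_subset_Icc_self ht))) hsub
    hy hy' (fun t ht => .inr (mem_image_of_mem y (Ico_subset_Icc_self ht))) hsuper ha

end Comparison

/-- The exponential barrier for the Riccati equation `x' = c * (1 - x ^ 2)`: the curve starting at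
`x₀` at time `0` whose distance to the equilibrium `1` decays at the constant relative rate
`c * (1 + x₀)` that the equation prescribes at time `0`. -/
noncomputable def riccatiBarrier (c x₀ t : ℝ) : ℝ :=
  1 - (1 - x₀) * Real.exp (-c * (1 + x₀) * t)

theorem riccatiBarrier_zero (c x₀ : ℝ) : riccatiBarrier c x₀ 0 = x₀ := by
  simp [riccatiBarrier]

theorem hasDerivAt_riccatiBarrier (c x₀ t : ℝ) :
    HasDerivAt (riccatiBarrier c x₀) (c * (1 + x₀) * (1 - riccatiBarrier c x₀ t)) t := by
  convert! ((((hasDerivAt_id t).const_mul (-c * (1 + x₀))).exp).const_mul (1 - x₀)).const_sub 1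
    using 1
  simp only [riccatiBarrier, id]
  ring

theorem mul_one_sub_exp_neg_mul_nonneg {c r : ℝ} (hr : 0 ≤ r) :
    0 ≤ c * (1 - Real.exp (-c * r)) := by
  rcases le_total 0 c with hc | hc
  · exact mul_nonneg hc (sub_nonneg.mpr (Real.exp_le_one_iff.mpr (by nlinarith)))
  · exact mul_nonneg_of_nonpos_of_nonpos hc
      (sub_nonpos.mpr (Real.one_le_exp_iff.mpr (by nlinarith)))

theorem riccatiBarrier_deriv_le {c x₀ t : ℝ} (hx₀ : -1 ≤ x₀) (ht : 0 ≤ t) :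
    c * (1 + x₀) * (1 - riccatiBarrier c x₀ t) ≤ c * (1 - riccatiBarrier c x₀ t ^ 2) := by
  have hdefect : c * (1 - riccatiBarrier c x₀ t ^ 2) - c * (1 + x₀) * (1 - riccatiBarrier c x₀ t) =
      (1 - x₀) ^ 2 * Real.exp (-c * ((1 + x₀) * t)) *
        (c * (1 - Real.exp (-c * ((1 + x₀) * t)))) := by
    rw [riccatiBarrier, mul_assoc (-c)]
    ring
  have hrate : 0 ≤ (1 + x₀) * t := mul_nonneg (by linarith) ht
  rw [← sub_nonneg, hdefect]
  exact mul_nonneg (by positivity) (mul_one_sub_exp_neg_mul_nonneg hrate)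

theorem exponential_convergence_of_riccati_inequality_general
    {c b : ℝ} {f f' : ℝ → ℝ} (hf : ContinuousOn f (Icc 0 b))
    (hf' : ∀ t ∈ Ico 0 b, HasDerivWithinAt f (f' t) (Ici t) t) (h0 : -1 ≤ f 0)
    (hderiv : ∀ t ∈ Ico 0 b, c * (1 - f t ^ 2) ≤ f' t) :
    ∀ t ∈ Icc 0 b, 1 - f t ≤ (1 - f 0) * Real.exp (-c * (1 + f 0) * t) := by
  have hlip : LocallyLipschitz fun x : ℝ => c * (1 - x ^ 2) :=
    ContDiff.locallyLipschitz (𝕂 := ℝ) (by fun_prop)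
  have hbarrier : ∀ t ∈ Icc 0 b, riccatiBarrier c (f 0) t ≤ f t :=
    le_of_subsolution_of_supersolution_of_locallyLipschitz hlip
      (fun t _ => (hasDerivAt_riccatiBarrier c (f 0) t).continuousAt.continuousWithinAt)
      (fun t _ => (hasDerivAt_riccatiBarrier c (f 0) t).hasDerivWithinAt)
      (fun t ht => riccatiBarrier_deriv_le h0 ht.1) hf hf' hderiv (riccatiBarrier_zero c (f 0)).le
  exact fun t ht => sub_le_comm.mp (hbarrier t ht)

/-- The differential inequality of Lemma 3.4.1: if `|f| ≤ 1` and
`f' ≥ c (1 − f²)` on `[0, ∞)` with `f 0 > −1`, then `f` converges to `1`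
exponentially fast. -/
theorem exponential_convergence_of_riccati_inequality
    (c : ℝ) (hc : 0 < c) (f : ℝ → ℝ) (hf : Differentiable ℝ f)
    (h0 : f 0 > -1)
    (hbound : ∀ t ≥ (0 : ℝ), |f t| ≤ 1)
    (hderiv : ∀ t ≥ (0 : ℝ), deriv f t ≥ c * (1 - (f t) ^ 2)) :
    ∀ t ≥ (0 : ℝ), 1 - f t ≤ (1 - f 0) * Real.exp (-c * (1 + f 0) * t) := fun t ht =>
  exponential_convergence_of_riccati_inequality_general hf.continuous.continuousOn
    (fun s _ => (hf s).hasDerivAt.hasDerivWithinAt) h0.le (fun s hs => hderiv s hs.1) t ⟨ht, le_rfl⟩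
end

section
/- Let n : ℕ, let A be a real n × n matrix which is symmetric and positive semidefinite, and let t ≥ 0. Then both matrices ((cosh t) • 1 + (sinh t) • A)² − (sinh t)² • (1 + A²) and (2 (cosh t)²) • (1 + A²) − ((cosh t) • 1 + (sinh t) • A)² are positive semidefinite. Equivalently, in the Loewner order, (sinh t)² (1 + A²) ≤ ((cosh t) 1 + (sinh t) A)² ≤ 2 (cosh t)² (1 + A²). -/
/-!
With `x = cosh t • 1` and `y = sinh t • a`, the two bounds compare `(x + y) ^ 2` with
`x ^ 2 + y ^ 2`: the cross terms `x * y + y * x` are nonnegative, and they are at most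
`x ^ 2 + y ^ 2` because `(x - y) ^ 2`, the square of a self-adjoint element, is nonnegative.
Both bounds then follow from `sinh t ^ 2 ≤ cosh t ^ 2`.
-/

section OrderedRing

variable {R : Type*} [Ring R] [PartialOrder R] [IsOrderedAddMonoid R]

theorem sq_add_sq_le_add_sq {x y : R} (hxy : 0 ≤ x * y + y * x) :
    x ^ 2 + y ^ 2 ≤ (x + y) ^ 2 :=
  calc
    x ^ 2 + y ^ 2 ≤ x ^ 2 + y ^ 2 + (x * y + y * x) := le_add_of_nonneg_right hxy
    _ = (x + y) ^ 2 := by noncomm_ring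

theorem sq_smul_one_add_sq_le [ZeroLEOneClass R] {k : Type*} [CommRing k] [Preorder k]
    [Algebra k R] [SMulPosMono k R] {c s : k} {a : R} (hsc : s ^ 2 ≤ c ^ 2)
    (ha : 0 ≤ (c * s) • a) :
    s ^ 2 • (1 + a ^ 2) ≤ (c • 1 + s • a) ^ 2 := by
  have cross_nonneg : 0 ≤ (c • 1) * (s • a) + (s • a) * (c • 1) := by
    simpa [smul_smul, mul_comm s c] using add_nonneg ha ha
  calc
    s ^ 2 • (1 + a ^ 2) = s ^ 2 • 1 + s ^ 2 • a ^ 2 := smul_add _ _ _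
    _ ≤ c ^ 2 • 1 + s ^ 2 • a ^ 2 := by gcongr
    _ = (c • 1) ^ 2 + (s • a) ^ 2 := by simp only [smul_pow, one_pow]
    _ ≤ (c • 1 + s • a) ^ 2 := sq_add_sq_le_add_sq cross_nonneg

end OrderedRing

section StarOrderedRing

variable {R : Type*} [Ring R] [StarRing R] [PartialOrder R] [StarOrderedRing R]

theorem add_sq_le_of_isSelfAdjoint_sub {x y : R} (hxy : IsSelfAdjoint (x - y)) :
    (x + y) ^ 2 ≤ 2 * (x ^ 2 + y ^ 2) :=
  calc
    (x + y) ^ 2 ≤ (x + y) ^ 2 + (x - y) ^ 2 := le_add_of_nonneg_right hxy.sq_nonneg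
    _ = 2 * (x ^ 2 + y ^ 2) := by noncomm_ring

theorem smul_one_add_smul_sq_le {k : Type*} [CommRing k] [Preorder k] [Star k] [TrivialStar k]
    [Algebra k R] [StarModule k R] [SMulPosMono k R] {c s : k} {a : R} (hsc : s ^ 2 ≤ c ^ 2)
    (ha : IsSelfAdjoint a) :
    (c • 1 + s • a) ^ 2 ≤ (2 * c ^ 2) • (1 + a ^ 2) := by
  have sub_selfAdjoint : IsSelfAdjoint (c • 1 - s • a) :=
    ((IsSelfAdjoint.all c).smul (.one R)).sub ((IsSelfAdjoint.all s).smul ha)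
  have sq_le : s ^ 2 • a ^ 2 ≤ c ^ 2 • a ^ 2 :=
    smul_le_smul_of_nonneg_right hsc ha.sq_nonneg
  calc
    (c • 1 + s • a) ^ 2 ≤ 2 * ((c • 1) ^ 2 + (s • a) ^ 2) :=
      add_sq_le_of_isSelfAdjoint_sub sub_selfAdjoint
    _ = 2 * (c ^ 2 • 1 + s ^ 2 • a ^ 2) := by simp only [smul_pow, one_pow]
    _ ≤ 2 * (c ^ 2 • 1 + c ^ 2 • a ^ 2) := by
      simp only [two_mul]
      gcongr
    _ = (2 * c ^ 2) • (1 + a ^ 2) := by rw [← smul_add, mul_smul, two_smul, two_mul]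

theorem parallel_metric_sandwich_general [Algebra ℝ R] [StarModule ℝ R] {a : R}
    (ha : IsSelfAdjoint a) {t : ℝ} (hta : 0 ≤ Real.sinh t • a) :
    Real.sinh t ^ 2 • (1 + a ^ 2) ≤ (Real.cosh t • 1 + Real.sinh t • a) ^ 2 ∧
      (Real.cosh t • 1 + Real.sinh t • a) ^ 2 ≤ (2 * Real.cosh t ^ 2) • (1 + a ^ 2) := by
  have sinh_sq_le_cosh_sq : Real.sinh t ^ 2 ≤ Real.cosh t ^ 2 := by
    rw [Real.cosh_sq]
    exact le_add_of_nonneg_right zero_le_one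
  have cosh_mul_sinh_smul_nonneg : 0 ≤ (Real.cosh t * Real.sinh t) • a := by
    rw [mul_smul]
    exact smul_nonneg (Real.cosh_pos t).le hta
  exact ⟨sq_smul_one_add_sq_le sinh_sq_le_cosh_sq cosh_mul_sinh_smul_nonneg,
    smul_one_add_smul_sq_le sinh_sq_le_cosh_sq ha⟩

end StarOrderedRing

/-- The matrix inequality underlying Lemma 4.1.1: for `A` symmetric positive
semidefinite and `t ≥ 0`,
`sinh²(t) (1 + A²) ≤ ((cosh t) 1 + (sinh t) A)² ≤ 2 cosh²(t) (1 + A²)`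
in the Loewner order. -/
theorem parallel_metric_sandwich
    (n : ℕ) (A : Matrix (Fin n) (Fin n) ℝ) (hA : A.PosSemidef)
    (t : ℝ) (ht : 0 ≤ t) :
    ((Real.cosh t • (1 : Matrix (Fin n) (Fin n) ℝ) + Real.sinh t • A) ^ 2
        - Real.sinh t ^ 2 • ((1 : Matrix (Fin n) (Fin n) ℝ) + A ^ 2)).PosSemidef ∧
    ((2 * Real.cosh t ^ 2) • ((1 : Matrix (Fin n) (Fin n) ℝ) + A ^ 2)
        - (Real.cosh t • (1 : Matrix (Fin n) (Fin n) ℝ) + Real.sinh t • A) ^ 2).PosSemidef := by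
  open scoped MatrixOrder in
  exact parallel_metric_sandwich_general hA.isHermitian
    (smul_nonneg (Real.sinh_nonneg_iff.mpr ht) hA.nonneg)
end

section
/- Let k ∈ (0,1) and let A : ℝ → Matrix (Fin 2) (Fin 2) ℝ satisfy, for every t ∈ ℝ, HasDerivAt A (1 − (A t)²) t (the tube-formula Riccati equation Ȧ = Id − A²). Suppose A 0 is symmetric and positive definite with det (A 0) = k. Then for every t > 0, k < det (A t) and det (A t) < 1. -/
attribute [local instance] Matrix.normedAddCommGroup Matrix.normedSpace

/-!
The Riccati equation `Ȧ = 1 - A²` is linearised by the Jacobi equation `Ÿ = Y`. If `Y` has initial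
data `Y 0 = 1`, `Ẏ 0 = A 0`, then `Z = A * Y - Ẏ` solves `Ż = -A * Z` with `Z 0 = 0`, so that
`A * Y = Ẏ`. For `2 × 2` matrices, `cosh² - sinh² = 1` gives `det Y - det Ẏ = 1 - det (A 0)`, and
hence `(1 - det A) * det Y = 1 - det (A 0)`. Since `det Y > 1` for positive times, `1 - det A` lies
strictly between `0` and `1 - det (A 0)`.
-/

open Set

section JacobiField

variable {E : Type*} [AddCommGroup E] [Module ℝ E]

/-- The solution of the Jacobi equation `Ÿ = Y` of hyperbolic space with `Y 0 = x` and `Ẏ 0 = y`,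
in closed form. Its derivative is the Jacobi field `jacobiField y x`. -/
noncomputable def jacobiField (x y : E) (t : ℝ) : E :=
  Real.cosh t • x + Real.sinh t • y

@[simp]
lemma jacobiField_zero (x y : E) : jacobiField x y 0 = x := by
  simp [jacobiField]

end JacobiField

lemma hasDerivAt_jacobiField {E : Type*} [NormedAddCommGroup E] [NormedSpace ℝ E] (x y : E)
    (t : ℝ) : HasDerivAt (jacobiField x y) (jacobiField y x t) t := by
  refine (((Real.hasDerivAt_cosh t).smul_const x).add
    ((Real.hasDerivAt_sinh t).smul_const y)).congr_deriv ?_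
  exact add_comm _ _

lemma eqOn_zero_of_hasDerivWithinAt_smul {R E : Type*} [SeminormedRing R] [NormedAddCommGroup E]
    [NormedSpace ℝ E] [Module R E] [IsBoundedSMul R E] {B : ℝ → R} {Z : ℝ → E} {a b : ℝ}
    (hB : ContinuousOn B (Icc a b)) (hZ : ContinuousOn Z (Icc a b))
    (hZ' : ∀ t ∈ Ico a b, HasDerivWithinAt Z (B t • Z t) (Ici t) t) (ha : Z a = 0) :
    EqOn Z 0 (Icc a b) := by
  obtain ⟨K, hK⟩ := isCompact_Icc.exists_bound_of_continuousOn hB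
  refine eq_zero_of_abs_deriv_le_mul_abs_self_of_eq_zero_right (K := K) hZ hZ' ha fun t ht => ?_
  calc ‖B t • Z t‖ ≤ ‖B t‖ * ‖Z t‖ := norm_smul_le _ _
    _ ≤ K * ‖Z t‖ := by gcongr; exact hK t (Ico_subset_Icc_self ht)

lemma riccati_mul_jacobiField {R : Type*} [NormedRing R] [NormedAlgebra ℝ R] {A : ℝ → R} {b : ℝ}
    (hA : ContinuousOn A (Icc 0 b))
    (hA' : ∀ t ∈ Ico 0 b, HasDerivWithinAt A (1 - A t ^ 2) (Ici t) t) {t : ℝ}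
    (ht : t ∈ Icc 0 b) :
    A t * jacobiField 1 (A 0) t = jacobiField (A 0) 1 t := by
  let Y := jacobiField 1 (A 0)
  let Y' := jacobiField (A 0) 1
  have hY (s : ℝ) : HasDerivAt Y (Y' s) s := hasDerivAt_jacobiField _ _ s
  have hY' (s : ℝ) : HasDerivAt Y' (Y s) s := hasDerivAt_jacobiField _ _ s
  have hZ : ContinuousOn (A * Y - Y') (Icc 0 b) :=
    (hA.mul (HasDerivAt.continuousOn fun s _ => hY s)).sub
      (HasDerivAt.continuousOn fun s _ => hY' s)
  have hZ' : ∀ s ∈ Ico 0 b,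
      HasDerivWithinAt (A * Y - Y') (-A s • (A * Y - Y') s) (Ici s) s := fun s hs => by
    refine (((hA' s hs).mul (hY s).hasDerivWithinAt).sub
      (hY' s).hasDerivWithinAt).congr_deriv ?_
    simp only [Pi.sub_apply, Pi.mul_apply, smul_eq_mul]
    noncomm_ring
  have hZ0 : (A * Y - Y') 0 = 0 := by simp [Y, Y']
  exact sub_eq_zero.1 (eqOn_zero_of_hasDerivWithinAt_smul hA.neg hZ hZ' hZ0 ht)

lemma det_smul_one_add_smul_fin_two {R : Type*} [CommRing R] (a b : R)
    (M : Matrix (Fin 2) (Fin 2) R) :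
    (a • 1 + b • M).det = a ^ 2 + a * b * M.trace + b ^ 2 * M.det := by
  simp only [Matrix.det_fin_two, Matrix.trace_fin_two, Matrix.add_apply, Matrix.smul_apply,
    Matrix.one_apply_eq, Matrix.one_apply_ne, ne_eq, zero_ne_one, one_ne_zero, not_false_eq_true,
    smul_eq_mul]
  ring

lemma det_jacobiField_one_left (M : Matrix (Fin 2) (Fin 2) ℝ) (t : ℝ) :
    (jacobiField 1 M t).det =
      Real.cosh t ^ 2 + Real.cosh t * Real.sinh t * M.trace + Real.sinh t ^ 2 * M.det :=
  det_smul_one_add_smul_fin_two _ _ M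

lemma det_jacobiField_one_right (M : Matrix (Fin 2) (Fin 2) ℝ) (t : ℝ) :
    (jacobiField M 1 t).det = (jacobiField 1 M t).det - (1 - M.det) := by
  rw [det_jacobiField_one_left, jacobiField, add_comm, det_smul_one_add_smul_fin_two]
  linear_combination (M.det - 1) * Real.cosh_sq t

lemma one_lt_det_jacobiField {M : Matrix (Fin 2) (Fin 2) ℝ} (htr : 0 < M.trace)
    (hdet : -1 ≤ M.det) {t : ℝ} (ht : 0 < t) : 1 < (jacobiField 1 M t).det := by
  have htr_term : 0 < Real.cosh t * Real.sinh t * M.trace :=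
    mul_pos (mul_pos (Real.cosh_pos t) (Real.sinh_pos_iff.2 ht)) htr
  have hdet_term : 0 ≤ (1 + M.det) * Real.sinh t ^ 2 :=
    mul_nonneg (by linarith) (sq_nonneg _)
  rw [det_jacobiField_one_left, Real.cosh_sq]
  linarith

-- Differentiability depends only on the topology, so the norm can be exchanged for a
-- submultiplicative one.
open scoped Matrix.Norms.Operator in
lemma one_sub_det_mul_det_jacobiField {A : ℝ → Matrix (Fin 2) (Fin 2) ℝ} {b : ℝ}
    (hA : ContinuousOn A (Icc 0 b))
    (hA' : ∀ t ∈ Ico 0 b, HasDerivWithinAt A (1 - A t ^ 2) (Ici t) t) {t : ℝ}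
    (ht : t ∈ Icc 0 b) :
    (1 - (A t).det) * (jacobiField 1 (A 0) t).det = 1 - (A 0).det := by
  have hmul : (A t).det * (jacobiField 1 (A 0) t).det = (jacobiField (A 0) 1 t).det := by
    rw [← Matrix.det_mul, riccati_mul_jacobiField hA hA' ht]
  rw [det_jacobiField_one_right] at hmul
  linear_combination -hmul

theorem extrinsic_curvature_along_normal_flow_general {A : ℝ → Matrix (Fin 2) (Fin 2) ℝ} {t : ℝ}
    (ht : 0 < t) (hA : ContinuousOn A (Icc 0 t))
    (hA' : ∀ s ∈ Ico 0 t, HasDerivWithinAt A (1 - A s ^ 2) (Ici s) s)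
    (htr : 0 < (A 0).trace) (hdet : (A 0).det ∈ Ico (-1) 1) :
    (A 0).det < (A t).det ∧ (A t).det < 1 := by
  have hY : 1 < (jacobiField 1 (A 0) t).det := one_lt_det_jacobiField htr hdet.1 ht
  have hAY := one_sub_det_mul_det_jacobiField hA hA' (right_mem_Icc.2 ht.le)
  have h_lt_one : 0 < 1 - (A t).det :=
    pos_of_mul_pos_left (hAY ▸ sub_pos.2 hdet.2) (zero_le_one.trans hY.le)
  have h_lt : 1 - (A t).det < 1 - (A 0).det := hAY ▸ lt_mul_of_one_lt_right h_lt_one hY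
  exact ⟨(sub_lt_sub_iff_left 1).1 h_lt, sub_pos.1 h_lt_one⟩

/-- Lemma 4.5.1: if the shape operator `A` evolves by the tube-formula Riccati
equation `Ȧ = Id − A²`, with `A 0` symmetric positive definite of determinant
`k ∈ (0,1)`, then for all `t > 0` the determinant satisfies `k < det (A t) < 1`. -/
theorem extrinsic_curvature_along_normal_flow
    (k : ℝ) (hk : k ∈ Set.Ioo (0 : ℝ) 1)
    (A : ℝ → Matrix (Fin 2) (Fin 2) ℝ)
    (hA : ∀ t : ℝ, HasDerivAt A (1 - (A t) ^ 2) t)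
    (hsymm : (A 0).IsSymm) (hpos : (A 0).PosDef) (hdet : (A 0).det = k) :
    ∀ t > (0 : ℝ), k < (A t).det ∧ (A t).det < 1 := by
  subst hdet
  exact fun t ht => extrinsic_curvature_along_normal_flow_general ht
    (HasDerivAt.continuousOn fun s _ => hA s) (fun s _ => (hA s).hasDerivWithinAt)
    hpos.trace_pos ⟨by linarith [hk.1], hk.2⟩
end
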